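/- Let λ and ρ be two right-infinite words over a finite alphabet A, and for n ∈ ℕ let λ_n and ρ_n denote their prefixes of length n. Then the set OG_{λ,ρ} = {og(λ_n, ρ_n) : n ∈ ℕ} is finite if and only if there exists a finite word w over A such that ρ = wλ or λ = wρ. -/

import Mathlib

/-- The suffix of length `n` of the left-infinite word `⋯ (lam 2)(lam 1)(lam 0)`. -/
def lSuffix {A : Type*} (lam : ℕ → A) (n : ℕ) : List A := (List.range n).reverse.map lam

/-- The prefix of length `n` of the right-infinite word `(rho 0)(rho 1)(rho 2) ⋯`. -/
def rPrefix {A : Type*} (rho : ℕ → A) (n : ℕ) : List A := (List.range n).map rho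

/-- The left overlap gap between two finite words. -/
noncomputable def logGap {A : Type*} (u v : List A) : ℕ :=
  sInf {n | ∃ x x' : List A, x.length = n ∧ x'.length = n ∧ u ++ x = x' ++ v}

/-- The right overlap gap between two finite words. -/
noncomputable def rogGap {A : Type*} (u v : List A) : ℕ :=
  sInf {n | ∃ x x' : List A, x.length = n ∧ x'.length = n ∧ x ++ u = v ++ x'}

/-- The overlap gap between two finite words. -/
noncomputable def ogGap {A : Type*} (u v : List A) : ℕ := min (logGap u v) (rogGap u v)

/-!
If `λ` arises from `ρ` by deleting a prefix of length `k`, or vice versa, all overlap gaps are at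
most `k`. Otherwise each fixed shift `k` of one word mismatches the other at some position, so `k`
is not an overlap gap of any two sufficiently long prefixes. Every natural number therefore occurs
only finitely often as an overlap gap, and the overlap gaps tend to infinity.
-/

open Filter

section FiniteWords

variable {A : Type*} {u v : List A}

theorem rogGap_eq_logGap_swap (u v : List A) : rogGap u v = logGap v u := by
  have overlap_symm (n : ℕ) :
      (∃ x x' : List A, x.length = n ∧ x'.length = n ∧ x ++ u = v ++ x') ↔
        ∃ x x' : List A, x.length = n ∧ x'.length = n ∧ v ++ x = x' ++ u := by
    rw [exists_comm]
    simp only [and_left_comm, eq_comm]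
  simp only [rogGap, logGap, overlap_symm]

theorem logGap_le_length (h : u.length = v.length) : logGap u v ≤ u.length :=
  Nat.sInf_le ⟨v, u, h.symm, rfl, rfl⟩

theorem drop_logGap_isPrefix (h : u.length = v.length) : u.drop (logGap u v) <+: v := by
  obtain ⟨x, x', -, hx', heq⟩ : logGap u v ∈
      {n | ∃ x x' : List A, x.length = n ∧ x'.length = n ∧ u ++ x = x' ++ v} :=
    Nat.sInf_mem ⟨u.length, v, u, h.symm, rfl, rfl⟩
  have hu : u <+: x' ++ v := ⟨x, heq⟩
  simpa only [← hx', List.drop_left] using hu.drop x'.length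

theorem logGap_le_of_drop_isPrefix {k : ℕ} (h : u.length = v.length) (hk : u.drop k <+: v) :
    logGap u v ≤ k := by
  rcases le_total k u.length with hku | hku
  · obtain ⟨x, rfl⟩ := hk
    have hx : x.length = k := by
      rw [List.length_append, List.length_drop] at h
      omega
    exact Nat.sInf_le ⟨x, u.take k, hx, List.length_take_of_le hku,
      by rw [← List.append_assoc, List.take_append_drop]⟩
  · exact (logGap_le_length h).trans hku

end FiniteWords

section InfiniteWords

variable {A : Type*} {lam rho : ℕ → A}

/-- The right-infinite word `rho` is a tail of `lam`: it is left after deleting a finite prefix of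
`lam`. The length of the prefix encodes the prefix itself. -/
def IsTail (rho lam : ℕ → A) : Prop := ∃ k, ∀ i, lam (k + i) = rho i

theorem length_rPrefix (lam : ℕ → A) (n : ℕ) : (rPrefix lam n).length = n := by
  simp [rPrefix]

theorem length_rPrefix_eq_length_rPrefix (lam rho : ℕ → A) (n : ℕ) :
    (rPrefix lam n).length = (rPrefix rho n).length := by
  rw [length_rPrefix, length_rPrefix]

theorem drop_rPrefix_isPrefix_rPrefix_iff {k n : ℕ} :
    (rPrefix lam n).drop k <+: rPrefix rho n ↔ ∀ i, k + i < n → lam (k + i) = rho i := by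
  rw [List.prefix_iff_getElem]
  simp [rPrefix, Nat.lt_sub_iff_add_lt']

theorem isTail_iff_exists_eq_append :
    IsTail rho lam ↔
      ∃ w : List A, rPrefix lam w.length = w ∧ ∀ i, lam (w.length + i) = rho i := by
  constructor
  · rintro ⟨k, hk⟩
    exact ⟨rPrefix lam k, by rw [length_rPrefix], by rwa [length_rPrefix]⟩
  · rintro ⟨w, -, hw⟩
    exact ⟨w.length, hw⟩

theorem IsTail.bddAbove_range_logGap (h : IsTail rho lam) :
    BddAbove (Set.range fun n ↦ logGap (rPrefix lam n) (rPrefix rho n)) := by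
  obtain ⟨k, hk⟩ := h
  refine ⟨k, Set.forall_mem_range.2 fun n ↦ ?_⟩
  exact logGap_le_of_drop_isPrefix (length_rPrefix_eq_length_rPrefix lam rho n)
    (drop_rPrefix_isPrefix_rPrefix_iff.2 fun i _ ↦ hk i)

theorem tendsto_logGap_atTop_of_not_isTail (h : ¬ IsTail rho lam) :
    Tendsto (fun n ↦ logGap (rPrefix lam n) (rPrefix rho n)) atTop atTop := by
  suffices ∀ k, ∀ᶠ n in atTop, logGap (rPrefix lam n) (rPrefix rho n) ≠ k by
    rw [← Nat.cofinite_eq_atTop] at this ⊢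
    exact le_cofinite_iff_eventually_ne.2 this
  intro k
  obtain ⟨i, hi⟩ : ∃ i, lam (k + i) ≠ rho i := not_forall.1 fun hk ↦ h ⟨k, hk⟩
  filter_upwards [eventually_gt_atTop (k + i)] with n hn rfl
  have hdrop := drop_logGap_isPrefix (length_rPrefix_eq_length_rPrefix lam rho n)
  exact hi (drop_rPrefix_isPrefix_rPrefix_iff.1 hdrop i hn)

theorem tendsto_ogGap_atTop_of_not_isTail (hlam : ¬ IsTail lam rho) (hrho : ¬ IsTail rho lam) :
    Tendsto (fun n ↦ ogGap (rPrefix lam n) (rPrefix rho n)) atTop atTop := by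
  simp only [ogGap, rogGap_eq_logGap_swap]
  refine tendsto_atTop.2 fun b ↦ ?_
  filter_upwards [(tendsto_logGap_atTop_of_not_isTail hrho).eventually_ge_atTop b,
    (tendsto_logGap_atTop_of_not_isTail hlam).eventually_ge_atTop b] with n using le_min

theorem bddAbove_range_ogGap_iff :
    BddAbove (Set.range fun n ↦ ogGap (rPrefix lam n) (rPrefix rho n)) ↔
      IsTail lam rho ∨ IsTail rho lam := by
  constructor
  · contrapose!
    rintro ⟨hlam, hrho⟩
    exact not_bddAbove_of_tendsto_atTop (tendsto_ogGap_atTop_of_not_isTail hlam hrho)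
  · simp only [ogGap, rogGap_eq_logGap_swap]
    rintro (h | h)
    · exact h.bddAbove_range_logGap.range_mono _ fun n ↦ min_le_right _ _
    · exact h.bddAbove_range_logGap.range_mono _ fun n ↦ min_le_left _ _

end InfiniteWords

theorem og_finite_iff_right_general {A : Type*} (lam rho : ℕ → A) :
    (Set.range fun n => ogGap (rPrefix lam n) (rPrefix rho n)).Finite ↔
      ∃ w : List A,
        (rPrefix rho w.length = w ∧ ∀ i, rho (w.length + i) = lam i) ∨
        (rPrefix lam w.length = w ∧ ∀ i, lam (w.length + i) = rho i) := by
  rw [Set.finite_iff_bddAbove, bddAbove_range_ogGap_iff, isTail_iff_exists_eq_append,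
    isTail_iff_exists_eq_append, exists_or]

/-- For two right-infinite words `λ, ρ`, the set `OG_{λ,ρ} = {og(λ_n, ρ_n) : n ∈ ℕ}`
(with `λ_n, ρ_n` prefixes of length `n`) is finite iff `ρ = wλ` or `λ = wρ` for some
finite word `w`. -/
theorem og_finite_iff_right {A : Type*} [Fintype A] [Nonempty A] (lam rho : ℕ → A) :
    (Set.range fun n => ogGap (rPrefix lam n) (rPrefix rho n)).Finite ↔
      ∃ w : List A,
        (rPrefix rho w.length = w ∧ ∀ i, rho (w.length + i) = lam i) ∨
        (rPrefix lam w.length = w ∧ ∀ i, lam (w.length + i) = rho i) :=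
  og_finite_iff_right_general lam rho
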